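/- arXiv:2504.17285 — 2 statements merged into one kernel-verified Lean document; each statement's English description precedes it below -/
import Mathlib

section
/- Let p ∈ (3/2, 9/2] and r ∈ [1, 2p') be real exponents, where p' = p/(p−1). For every σ > 0 there exists a constant C_σ > 0 (depending only on σ, p, r) such that for every R > 0, every s, t with 3R/2 ≤ s < t ≤ 2R, every smooth vector field u : ℝ³ → ℝ³ and every smooth function θ : ℝ³ → ℝ, the quantity J₄ = (t−s)^{−1} ∫_{B_t∖B_s} |θ − θ̄_R|² |u| dx satisfies J₄ ≤ σ ‖θ − θ̄_R‖²_{L^6(B_t∖B_R)} + C_σ (t−s)^{−(6−r)p'/((3−p')r)} ‖u‖_{L^p(B_{2R}∖B_R)}^{(6−r)p'/((3−p')r)} ‖θ − θ̄_R‖²_{L^r(B_{2R}∖B_R)} (the inequality interpreted in the extended nonnegative reals). -/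
open MeasureTheory Metric Filter
open scoped ENNReal NNReal

noncomputable section

/-- Euclidean `ℝ³`. -/
abbrev E3 := EuclideanSpace ℝ (Fin 3)

/-- The annulus `B_{2R} \ B_R` centered at the origin. -/
def Ann (R : ℝ) : Set E3 := ball (0 : E3) (2 * R) \ ball (0 : E3) R

/-- Mean value of `θ` over the annulus `B_{2R} \ B_R`. -/
def thetaBar (θ : E3 → ℝ) (R : ℝ) : ℝ := ⨍ x in Ann R, θ x

/-- `L^p` norm (with real exponent `p`) of `f` over the set `s`, valued in `ℝ≥0∞`. -/
def LpS {F : Type*} [NormedAddCommGroup F] (f : E3 → F) (p : ℝ) (s : Set E3) : ℝ≥0∞ :=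
  eLpNorm f (ENNReal.ofReal p) (volume.restrict s)

/-!
Write `p'` for the conjugate exponent of `p`. Hölder's inequality bounds `∫ |f|² |u|` by
`‖u‖_p ‖f‖²_{2p'}`. Since `r < 2p' < 6` (the latter because `p > 3/2`), interpolation splits the
last factor as `(‖f‖²_r)^{1/κ} (‖f‖²_6)^{1 - 1/κ}` with `κ = (6 - r) p' / ((3 - p') r) > 1`, and a
weighted Young inequality absorbs the `L⁶` factor, leaving the power `κ` on `(t - s)⁻¹ ‖u‖_p`.
-/

lemma rpow_mul_rpow_one_sub_le_add (a b : ℝ≥0∞) {m : ℝ} (hm0 : 0 ≤ m) (hm1 : m ≤ 1) :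
    a ^ m * b ^ (1 - m) ≤ a + b :=
  calc a ^ m * b ^ (1 - m) ≤ (a + b) ^ m * (a + b) ^ (1 - m) := by
        have : 0 ≤ 1 - m := sub_nonneg.2 hm1
        gcongr
        · exact le_self_add
        · exact le_add_self
    _ = a + b := by
        rw [← ENNReal.rpow_add_of_nonneg _ _ hm0 (sub_nonneg.2 hm1), add_sub_cancel,
          ENNReal.rpow_one]

lemma mul_rpow_inv_mul_rpow_le_add (l a b : ℝ≥0∞) {c : ℝ≥0∞} (hc0 : c ≠ 0) (hc : c ≠ ∞)
    {κ : ℝ} (hκ : 1 ≤ κ) :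
    l * (a ^ κ⁻¹ * b ^ (1 - κ⁻¹)) ≤ c * b + c ^ (1 - κ) * l ^ κ * a := by
  have hκ0 : 0 < κ := one_pos.trans_le hκ
  have hm0 : 0 ≤ κ⁻¹ := (inv_pos.2 hκ0).le
  have hm1 : κ⁻¹ ≤ 1 := inv_le_one_of_one_le₀ hκ
  have c_powers_cancel : (c ^ (1 - κ)) ^ κ⁻¹ * c ^ (1 - κ⁻¹) = 1 := by
    rw [← ENNReal.rpow_mul, ← ENNReal.rpow_add _ _ hc0 hc,
      show (1 - κ) * κ⁻¹ + (1 - κ⁻¹) = 0 by field_simp; ring, ENNReal.rpow_zero]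
  calc l * (a ^ κ⁻¹ * b ^ (1 - κ⁻¹))
      = (c ^ (1 - κ)) ^ κ⁻¹ * c ^ (1 - κ⁻¹) * (l * (a ^ κ⁻¹ * b ^ (1 - κ⁻¹))) := by
        rw [c_powers_cancel, one_mul]
    _ = (c ^ (1 - κ) * l ^ κ * a) ^ κ⁻¹ * (c * b) ^ (1 - κ⁻¹) := by
        rw [ENNReal.mul_rpow_of_nonneg _ _ hm0, ENNReal.mul_rpow_of_nonneg _ _ hm0,
          ENNReal.mul_rpow_of_nonneg _ _ (sub_nonneg.2 hm1), ENNReal.rpow_rpow_inv hκ0.ne']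
        ring
    _ ≤ c ^ (1 - κ) * l ^ κ * a + c * b := rpow_mul_rpow_one_sub_le_add _ _ hm0 hm1
    _ = c * b + c ^ (1 - κ) * l ^ κ * a := add_comm _ _

/-- The exponent `κ` with `‖f‖²_{L^{2q}} ≤ (‖f‖²_{L^r})^{1/κ} (‖f‖²_{L^a})^{1 - 1/κ}`, which is also
the power of `‖u‖_{L^p}` that remains once the `L^a` norm has been absorbed. -/
def absorptionExponent (q r a : ℝ) : ℝ := (a - r) * q / ((a / 2 - q) * r)

lemma one_lt_absorptionExponent {q r a : ℝ} (hr : 0 < r) (hrq : r < 2 * q) (hqa : 2 * q < a) :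
    1 < absorptionExponent q r a := by
  have : 0 < a / 2 - q := by linarith
  rw [absorptionExponent, one_lt_div (by positivity)]
  nlinarith

lemma one_div_two_mul_eq_inv_absorptionExponent_div_add {q r a : ℝ} (hr : 0 < r) (hrq : r < 2 * q)
    (hqa : 2 * q < a) :
    1 / (2 * q) =
      (absorptionExponent q r a)⁻¹ / r + (1 - (absorptionExponent q r a)⁻¹) / a := by
  have hq : q ≠ 0 := by linarith
  have ha : a ≠ 0 := by linarith
  have har : a - r ≠ 0 := by linarith
  rw [absorptionExponent, inv_div]
  field_simp
  ring

section LebesgueNorms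

variable {α ε ε' : Type*} [MeasurableSpace α] {μ : Measure α}
  [TopologicalSpace ε] [ContinuousENorm ε] [TopologicalSpace ε'] [ContinuousENorm ε']

lemma eLpNorm_ofReal_eq_lintegral_rpow_enorm (f : α → ε) {p : ℝ} (hp : 0 < p) :
    eLpNorm f (ENNReal.ofReal p) μ = (∫⁻ x, ‖f x‖ₑ ^ p ∂μ) ^ (1 / p) := by
  rw [eLpNorm_eq_lintegral_rpow_enorm_toReal (by simpa using hp) ENNReal.ofReal_ne_top,
    ENNReal.toReal_ofReal hp.le]

lemma eLpNorm_le_eLpNorm_rpow_mul_eLpNorm_rpow {f : α → ε} (hf : AEStronglyMeasurable f μ)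
    {p q r m : ℝ} (hp : 0 < p) (hq : 0 < q) (hr : 0 < r) (hm0 : 0 ≤ m) (hm1 : m ≤ 1)
    (hpqr : 1 / q = m / p + (1 - m) / r) :
    eLpNorm f (ENNReal.ofReal q) μ ≤
      eLpNorm f (ENNReal.ofReal p) μ ^ m * eLpNorm f (ENNReal.ofReal r) μ ^ (1 - m) := by
  have : 0 ≤ 1 - m := sub_nonneg.2 hm1
  have weights_add : q * m / p + q * (1 - m) / r = 1 := by
    rw [mul_div_assoc, mul_div_assoc, ← mul_add, ← hpqr, mul_one_div_cancel hq.ne']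
  have split_power (x : α) :
      ‖f x‖ₑ ^ q = (‖f x‖ₑ ^ p) ^ (q * m / p) * (‖f x‖ₑ ^ r) ^ (q * (1 - m) / r) := by
    rw [← ENNReal.rpow_mul, ← ENNReal.rpow_mul, mul_div_cancel₀ _ hp.ne',
      mul_div_cancel₀ _ hr.ne', ← ENNReal.rpow_add_of_nonneg _ _ (by positivity) (by positivity)]
    congr 1
    ring
  simp only [eLpNorm_ofReal_eq_lintegral_rpow_enorm f, hp, hq, hr, ← ENNReal.rpow_mul]
  calc (∫⁻ x, ‖f x‖ₑ ^ q ∂μ) ^ (1 / q)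
      ≤ ((∫⁻ x, ‖f x‖ₑ ^ p ∂μ) ^ (q * m / p) *
          (∫⁻ x, ‖f x‖ₑ ^ r ∂μ) ^ (q * (1 - m) / r)) ^ (1 / q) := by
        simp only [split_power]
        gcongr
        exact ENNReal.lintegral_mul_norm_pow_le (hf.enorm.pow_const p) (hf.enorm.pow_const r)
          (by positivity) (by positivity) weights_add
    _ = (∫⁻ x, ‖f x‖ₑ ^ p ∂μ) ^ (1 / p * m) * (∫⁻ x, ‖f x‖ₑ ^ r ∂μ) ^ (1 / r * (1 - m)) := by
        rw [ENNReal.mul_rpow_of_nonneg _ _ (by positivity), ← ENNReal.rpow_mul, ← ENNReal.rpow_mul]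
        congr 2 <;> field_simp

lemma lintegral_enorm_rpow_mul_enorm_le {f : α → ε} {u : α → ε'}
    (hf : AEStronglyMeasurable f μ) (hu : AEStronglyMeasurable u μ) {p q a : ℝ}
    (hpq : p.HolderConjugate q) (ha : 0 < a) :
    ∫⁻ x, ‖f x‖ₑ ^ a * ‖u x‖ₑ ∂μ ≤
      eLpNorm u (ENNReal.ofReal p) μ * eLpNorm f (ENNReal.ofReal (a * q)) μ ^ a := by
  have eLpNorm_rpow : eLpNorm f (ENNReal.ofReal (a * q)) μ ^ a =
      (∫⁻ x, (‖f x‖ₑ ^ a) ^ q ∂μ) ^ (1 / q) := by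
    rw [mul_comm a q, ENNReal.ofReal_mul hpq.symm.nonneg, ← eLpNorm_enorm_rpow f ha,
      eLpNorm_ofReal_eq_lintegral_rpow_enorm _ hpq.symm.pos]
    simp only [enorm_eq_self]
  rw [eLpNorm_rpow, eLpNorm_ofReal_eq_lintegral_rpow_enorm u hpq.pos]
  simp only [mul_comm (‖f _‖ₑ ^ a)]
  exact ENNReal.lintegral_mul_le_Lp_mul_Lq μ hpq hu.enorm (hf.enorm.pow_const a)

lemma eLpNorm_two_mul_sq_le_rpow_mul_rpow {f : α → ε} (hf : AEStronglyMeasurable f μ)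
    {q r a : ℝ} (hr : 0 < r) (hrq : r < 2 * q) (hqa : 2 * q < a) :
    eLpNorm f (ENNReal.ofReal (2 * q)) μ ^ 2 ≤
      (eLpNorm f (ENNReal.ofReal r) μ ^ 2) ^ (absorptionExponent q r a)⁻¹ *
        (eLpNorm f (ENNReal.ofReal a) μ ^ 2) ^ (1 - (absorptionExponent q r a)⁻¹) := by
  have hκ := one_lt_absorptionExponent hr hrq hqa
  have interpolation := eLpNorm_le_eLpNorm_rpow_mul_eLpNorm_rpow hf hr (by linarith)
    (by linarith) (inv_nonneg.2 (by linarith)) (inv_le_one_of_one_le₀ hκ.le)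
    (one_div_two_mul_eq_inv_absorptionExponent_div_add hr hrq hqa)
  refine (pow_le_pow_left' interpolation 2).trans_eq ?_
  simp only [mul_pow, ← ENNReal.rpow_two, ← ENNReal.rpow_mul, mul_comm (2 : ℝ)]

lemma mul_lintegral_enorm_sq_mul_enorm_le {f : α → ε} {u : α → ε'}
    (hf : AEStronglyMeasurable f μ) (hu : AEStronglyMeasurable u μ) {p q r a : ℝ}
    (hpq : p.HolderConjugate q) (hr : 0 < r) (hrq : r < 2 * q) (hqa : 2 * q < a)
    (τ : ℝ≥0∞) {c : ℝ≥0∞} (hc0 : c ≠ 0) (hc : c ≠ ∞) :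
    τ * ∫⁻ x, ‖f x‖ₑ ^ 2 * ‖u x‖ₑ ∂μ ≤
      c * eLpNorm f (ENNReal.ofReal a) μ ^ 2 +
        c ^ (1 - absorptionExponent q r a) *
          (τ * eLpNorm u (ENNReal.ofReal p) μ) ^ absorptionExponent q r a *
            eLpNorm f (ENNReal.ofReal r) μ ^ 2 := by
  have holder := lintegral_enorm_rpow_mul_enorm_le hf hu hpq two_pos
  simp only [ENNReal.rpow_two] at holder
  grw [holder, eLpNorm_two_mul_sq_le_rpow_mul_rpow hf hr hrq hqa, ← mul_assoc]
  exact mul_rpow_inv_mul_rpow_le_add _ _ _ hc0 hc (one_lt_absorptionExponent hr hrq hqa).le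

theorem J4_estimate_i_general {E F : Type*} [NormedAddCommGroup E] [NormedAddCommGroup F]
    {p q r a σ δ : ℝ} (hpq : p.HolderConjugate q) (hr : 0 < r) (hrq : r < 2 * q) (hqa : 2 * q < a)
    (hσ : 0 < σ) (hδ : 0 < δ) {S T A : Set α} (hST : S ⊆ T) (hSA : S ⊆ A)
    {f : α → F} {u : α → E} (hf : AEStronglyMeasurable f (μ.restrict S))
    (hu : AEStronglyMeasurable u (μ.restrict S)) :
    ENNReal.ofReal δ⁻¹ * ∫⁻ x in S, ENNReal.ofReal (‖f x‖ ^ 2 * ‖u x‖) ∂μ ≤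
      ENNReal.ofReal σ * eLpNorm f (ENNReal.ofReal a) (μ.restrict T) ^ 2 +
        ENNReal.ofReal (σ ^ (1 - absorptionExponent q r a)) *
          ENNReal.ofReal (δ ^ (-absorptionExponent q r a)) *
            eLpNorm u (ENNReal.ofReal p) (μ.restrict A) ^ absorptionExponent q r a *
              eLpNorm f (ENNReal.ofReal r) (μ.restrict A) ^ 2 := by
  have hκ : 0 ≤ absorptionExponent q r a :=
    one_pos.le.trans (one_lt_absorptionExponent hr hrq hqa).le
  have integrand_eq (x : α) :
      ENNReal.ofReal (‖f x‖ ^ 2 * ‖u x‖) = ‖f x‖ₑ ^ 2 * ‖u x‖ₑ := by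
    rw [ENNReal.ofReal_mul (by positivity), ENNReal.ofReal_pow (norm_nonneg _), ofReal_norm,
      ofReal_norm]
  have scale_eq : ENNReal.ofReal (δ ^ (-absorptionExponent q r a)) =
      ENNReal.ofReal δ⁻¹ ^ absorptionExponent q r a := by
    rw [ENNReal.ofReal_rpow_of_pos (inv_pos.2 hδ), Real.inv_rpow hδ.le, Real.rpow_neg hδ.le]
  simp only [integrand_eq]
  grw [mul_lintegral_enorm_sq_mul_enorm_le hf hu hpq hr hrq hqa (ENNReal.ofReal δ⁻¹)
    (ENNReal.ofReal_pos.2 hσ).ne' ENNReal.ofReal_ne_top]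
  rw [scale_eq, ← ENNReal.ofReal_rpow_of_pos hσ, ENNReal.mul_rpow_of_nonneg _ _ hκ,
    ← mul_assoc (ENNReal.ofReal σ ^ _)]
  gcongr

end LebesgueNorms

theorem J4_estimate_i (p r : ℝ) (hp : 3 / 2 < p ∧ p ≤ 9 / 2)
    (hr : 1 ≤ r ∧ r < 2 * (p / (p - 1))) :
    ∀ σ : ℝ, 0 < σ → ∃ Cσ : ℝ, 0 < Cσ ∧
      ∀ R s t : ℝ, 0 < R → 3 * R / 2 ≤ s → s < t → t ≤ 2 * R →
      ∀ u : E3 → E3, ∀ θ : E3 → ℝ, ContDiff ℝ (⊤ : ℕ∞) u → ContDiff ℝ (⊤ : ℕ∞) θ →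
        ENNReal.ofReal ((t - s)⁻¹) *
          ∫⁻ x in ball (0 : E3) t \ ball (0 : E3) s,
            ENNReal.ofReal ((θ x - thetaBar θ R) ^ 2 * ‖u x‖)
        ≤ ENNReal.ofReal σ * LpS (fun x => θ x - thetaBar θ R) 6 (ball (0 : E3) t \ ball (0 : E3) R) ^ 2
          + ENNReal.ofReal Cσ * ENNReal.ofReal ((t - s) ^ (-((6 - r) * (p / (p - 1)) / ((3 - (p / (p - 1))) * r)))) *
              LpS u p (Ann R) ^ ((6 - r) * (p / (p - 1)) / ((3 - (p / (p - 1))) * r)) * LpS (fun x => θ x - thetaBar θ R) r (Ann R) ^ 2 := by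
  intro σ hσ
  have hpq : p.HolderConjugate (p / (p - 1)) := .conjExponent (by linarith)
  have hq : 2 * (p / (p - 1)) < 6 := by
    have : p / (p - 1) < 3 := by rw [div_lt_iff₀] <;> linarith
    linarith
  have exponent_eq (q : ℝ) : absorptionExponent q r 6 = (6 - r) * q / ((3 - q) * r) := by
    norm_num [absorptionExponent]
  refine ⟨σ ^ (1 - absorptionExponent (p / (p - 1)) r 6), by positivity, ?_⟩
  intro R s t _ hRs hst ht u θ hu hθ
  have annulus_subset : ball (0 : E3) t \ ball 0 s ⊆ ball 0 t \ ball 0 R :=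
    Set.sdiff_subset_sdiff_right (ball_subset_ball (by linarith))
  have annulus_subset_Ann : ball (0 : E3) t \ ball 0 s ⊆ Ann R :=
    annulus_subset.trans (Set.sdiff_subset_sdiff_left (ball_subset_ball ht))
  have hf : AEStronglyMeasurable (fun x => θ x - thetaBar θ R)
      (volume.restrict (ball 0 t \ ball 0 s)) :=
    (hθ.continuous.sub continuous_const).aestronglyMeasurable
  simpa only [LpS, exponent_eq, Real.norm_eq_abs, sq_abs] using
    J4_estimate_i_general hpq (by linarith) hr.2 hq hσ (sub_pos.2 hst) annulus_subset
      annulus_subset_Ann hf hu.continuous.aestronglyMeasurable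
end
end

section
/- Let q ∈ [1, 2) and r ∈ [2, 6] be real exponents. For every δ > 0 there exists a constant C_δ > 0 (depending only on δ, q, r) such that for every R > 0, every s, t with 3R/2 ≤ s < t ≤ 2R, every smooth vector field v : ℝ³ → ℝ³ and every smooth function θ : ℝ³ → ℝ, the quantity J₅ = (t−s)^{−1} ∫_{B_t∖B_s} |v| |θ − θ̄_R| dx satisfies J₅ ≤ δ ‖v‖²_{L^6(B_t∖B_R)} + C_δ (t−s)^{−2(6−q)/(6+q)} R^{3(r−2)(6−q)/(r(6+q))} ‖v‖_{L^q(B_{2R}∖B_R)}^{4q/(6+q)} ‖θ − θ̄_R‖_{L^r(B_{2R}∖B_R)}^{2(6−q)/(6+q)} (the inequality interpreted in the extended nonnegative reals). -/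
/-!
Cauchy–Schwarz on `B_t \ B_R` bounds the integral by `‖v‖_2 ‖θ - θ̄‖_2`. Interpolating `L²` between
`L⁶` and `L^q` gives `‖v‖_2 ≤ ‖v‖_6 ^ a * ‖v‖_q ^ (1 - a)` with `a = 3 (2 - q) / (6 - q) ∈ (0, 1)`,
and `L^r ⊆ L²` on a set of volume `O(R³)` costs a factor `R ^ (3 (1/2 - 1/r))`. Young's inequality
with exponents `2 / a` and `2 / (2 - a) = 2 (6 - q) / (6 + q)` then splits off `δ ‖v‖_6 ^ 2`.
-/

open MeasureTheory Metric Filter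
open scoped ENNReal NNReal

noncomputable section

section Young

theorem mul_le_mul_rpow_add_mul_rpow {p q : ℝ} (hpq : p.HolderConjugate q) {ε : ℝ≥0∞}
    (hε₀ : ε ≠ 0) (hε : ε ≠ ∞) (x y : ℝ≥0∞) :
    x * y ≤ ε * x ^ p + ε ^ (1 - q) * y ^ q := by
  have div_ofReal_le (z : ℝ≥0∞) {c : ℝ} (hc : 1 < c) : z / ENNReal.ofReal c ≤ z :=
    ENNReal.div_le_of_le_mul (le_mul_of_one_le_right' (ENNReal.one_le_ofReal.2 hc.le))
  have hexp : -p⁻¹ * q = 1 - q := by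
    rw [neg_mul, inv_mul_eq_div, hpq.symm.div_conj_eq_sub_one, neg_sub]
  calc x * y = (ε ^ p⁻¹ * x) * (ε ^ (-p⁻¹) * y) := by
        rw [mul_mul_mul_comm, ← ENNReal.rpow_add _ _ hε₀ hε, add_neg_cancel, ENNReal.rpow_zero,
          one_mul]
    _ ≤ (ε ^ p⁻¹ * x) ^ p + (ε ^ (-p⁻¹) * y) ^ q :=
        (ENNReal.young_inequality _ _ hpq).trans
          (add_le_add (div_ofReal_le _ hpq.lt) (div_ofReal_le _ hpq.symm.lt))
    _ = ε * x ^ p + ε ^ (1 - q) * y ^ q := by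
        rw [ENNReal.mul_rpow_of_nonneg _ _ hpq.nonneg,
          ENNReal.mul_rpow_of_nonneg _ _ hpq.symm.nonneg, ENNReal.rpow_inv_rpow hpq.ne_zero,
          ← ENNReal.rpow_mul, hexp]

end Young

section MeasureSpace

variable {α F G : Type*} {m : MeasurableSpace α} {μ : Measure α} [NormedAddCommGroup F]
  [NormedAddCommGroup G] {f : α → F} {g : α → G} {p q r : ℝ≥0∞} {a b : ℝ}

theorem lintegral_enorm_mul_le_eLpNorm_mul_eLpNorm [p.HolderConjugate q]
    (hf : AEStronglyMeasurable f μ) (hg : AEStronglyMeasurable g μ) :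
    ∫⁻ x, ‖f x‖ₑ * ‖g x‖ₑ ∂μ ≤ eLpNorm f p μ * eLpNorm g q μ := by
  have h := eLpNorm_smul_le_mul_eLpNorm (p := p) (q := q) (r := 1) hg.norm hf.norm
  simpa [eLpNorm_one_eq_lintegral_enorm, enorm_mul] using h

theorem eLpNorm_le_eLpNorm_rpow_mul_eLpNorm_rpow_s17 (hf : AEStronglyMeasurable f μ)
    (ha : 0 < a) (hb : 0 < b) (hab : a + b = 1)
    (hpqr : ENNReal.ofReal a * p⁻¹ + ENNReal.ofReal b * q⁻¹ = r⁻¹) :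
    eLpNorm f r μ ≤ eLpNorm f p μ ^ a * eLpNorm f q μ ^ b := by
  have ofReal_pos_ne {c : ℝ} (hc : 0 < c) : ENNReal.ofReal c ≠ 0 := by simpa using hc
  have : ENNReal.HolderTriple (p / ENNReal.ofReal a) (q / ENNReal.ofReal b) r := by
    constructor
    rw [ENNReal.inv_div (by simp) (.inl (ofReal_pos_ne ha)),
      ENNReal.inv_div (by simp) (.inl (ofReal_pos_ne hb)), div_eq_mul_inv, div_eq_mul_inv, hpqr]
  have eLpNorm_norm_rpow_div (s : ℝ≥0∞) {c : ℝ} (hc : 0 < c) :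
      eLpNorm (fun x => ‖f x‖ ^ c) (s / ENNReal.ofReal c) μ = eLpNorm f s μ ^ c := by
    rw [eLpNorm_norm_rpow f hc, ENNReal.div_mul_cancel (ofReal_pos_ne hc) ENNReal.ofReal_ne_top]
  calc eLpNorm f r μ = eLpNorm ((fun x => ‖f x‖ ^ a) • fun x => ‖f x‖ ^ b) r μ := by
        rw [← eLpNorm_norm]
        congr 1 with x
        simp [← Real.rpow_add_of_nonneg (norm_nonneg (f x)) ha.le hb.le, hab]
    _ ≤ eLpNorm f p μ ^ a * eLpNorm f q μ ^ b := by
        rw [← eLpNorm_norm_rpow_div p ha, ← eLpNorm_norm_rpow_div q hb]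
        exact eLpNorm_smul_le_mul_eLpNorm
          (hf.norm.aemeasurable.pow_const b).aestronglyMeasurable
          (hf.norm.aemeasurable.pow_const a).aestronglyMeasurable

theorem mul_lintegral_enorm_mul_le_mul_eLpNorm_sq_add (hf : AEStronglyMeasurable f μ)
    (hg : AEStronglyMeasurable g μ) (ha : 0 < a) (hb : 0 < b) (hab : a + b = 1)
    (hpq : ENNReal.ofReal a * p⁻¹ + ENNReal.ofReal b * q⁻¹ = 2⁻¹) {ε : ℝ≥0∞} (hε₀ : ε ≠ 0)
    (hε : ε ≠ ∞) (κ : ℝ≥0∞) :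
    κ * ∫⁻ x, ‖f x‖ₑ * ‖g x‖ₑ ∂μ ≤ ε * eLpNorm f p μ ^ 2 +
      ε ^ (1 - (1 - a / 2)⁻¹) * (κ * eLpNorm f q μ ^ b * eLpNorm g 2 μ) ^ (1 - a / 2)⁻¹ := by
  have hconj : (a / 2)⁻¹.HolderConjugate (1 - a / 2)⁻¹ :=
    Real.HolderConjugate.inv_one_sub_inv (by positivity) (by linarith)
  have hsq : (eLpNorm f p μ ^ a) ^ (a / 2)⁻¹ = eLpNorm f p μ ^ 2 := by
    rw [← ENNReal.rpow_mul, show a * (a / 2)⁻¹ = (2 : ℕ) by push_cast; field_simp,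
      ENNReal.rpow_natCast]
  calc κ * ∫⁻ x, ‖f x‖ₑ * ‖g x‖ₑ ∂μ
      ≤ κ * ((eLpNorm f p μ ^ a * eLpNorm f q μ ^ b) * eLpNorm g 2 μ) := by
        gcongr
        refine (lintegral_enorm_mul_le_eLpNorm_mul_eLpNorm (p := 2) (q := 2) hf hg).trans ?_
        gcongr
        exact eLpNorm_le_eLpNorm_rpow_mul_eLpNorm_rpow_s17 hf ha hb hab hpq
    _ = eLpNorm f p μ ^ a * (κ * eLpNorm f q μ ^ b * eLpNorm g 2 μ) := by ring
    _ ≤ _ := (mul_le_mul_rpow_add_mul_rpow hconj hε₀ hε _ _).trans_eq (by rw [hsq])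

end MeasureSpace

section Exponents

theorem inv_one_sub_interpolation_weight_div_two {q : ℝ} (hq₂ : q < 2) :
    (1 - 3 * (2 - q) / (6 - q) / 2)⁻¹ = 2 * (6 - q) / (6 + q) := by
  have h₆ : 6 - q ≠ 0 := by linarith
  rw [show 1 - 3 * (2 - q) / (6 - q) / 2 = (6 + q) / (2 * (6 - q)) by field_simp; ring, inv_div]

theorem interpolation_weights_six_two {q : ℝ} (hq₀ : 0 < q) (hq₂ : q < 2) :
    ENNReal.ofReal (3 * (2 - q) / (6 - q)) * (ENNReal.ofReal 6)⁻¹ +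
      ENNReal.ofReal (2 * q / (6 - q)) * (ENNReal.ofReal q)⁻¹ = 2⁻¹ := by
  have : 0 < 2 - q := by linarith
  have h₆ : 0 < 6 - q := by linarith
  rw [← ENNReal.ofReal_inv_of_pos (by norm_num), ← ENNReal.ofReal_inv_of_pos hq₀,
    ← ENNReal.ofReal_mul (by positivity), ← ENNReal.ofReal_mul (by positivity),
    ← ENNReal.ofReal_add (by positivity) (by positivity), ← ENNReal.ofReal_ofNat 2,
    ← ENNReal.ofReal_inv_of_pos two_pos]
  congr 1
  field_simp
  ring

end Exponents

section HaarMeasure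

variable {E F G : Type*} [NormedAddCommGroup E] [NormedSpace ℝ E] [FiniteDimensional ℝ E]
  [MeasurableSpace E] [BorelSpace E] [NormedAddCommGroup F] [NormedAddCommGroup G]
  (μ : Measure E) [μ.IsAddHaarMeasure]

theorem eLpNorm_restrict_le_mul_rpow_of_subset_ball {f : E → F} {A : Set E} {x : E} {c R : ℝ}
    {p q : ℝ} (hf : AEStronglyMeasurable f (μ.restrict A)) (hA : A ⊆ ball x (R * c)) (hR : 0 < R)
    (hp : 0 < p) (hpq : p ≤ q) :
    eLpNorm f (ENNReal.ofReal p) (μ.restrict A) ≤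
      eLpNorm f (ENNReal.ofReal q) (μ.restrict A) *
        (ENNReal.ofReal (R ^ (Module.finrank ℝ E * (1 / p - 1 / q))) *
          μ (ball 0 c) ^ (1 / p - 1 / q)) := by
  have he : 0 ≤ 1 / p - 1 / q := sub_nonneg.2 (one_div_le_one_div_of_le hp hpq)
  have hμA : μ A ≤ ENNReal.ofReal (R ^ Module.finrank ℝ E) * μ (ball 0 c) :=
    (measure_mono hA).trans_eq (Measure.addHaar_ball_mul_of_pos μ x hR c)
  have h := eLpNorm_le_eLpNorm_mul_rpow_measure_univ (ENNReal.ofReal_le_ofReal hpq) hf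
  rw [ENNReal.toReal_ofReal hp.le, ENNReal.toReal_ofReal (hp.le.trans hpq),
    Measure.restrict_apply_univ] at h
  refine h.trans ?_
  rw [Real.rpow_mul hR.le, Real.rpow_natCast,
    ← ENNReal.ofReal_rpow_of_nonneg (by positivity) he, ← ENNReal.mul_rpow_of_nonneg _ _ he]
  gcongr

variable {f : E → F} {g : E → G}

theorem mul_setLIntegral_enorm_mul_le_mul_eLpNorm_sq_add {p q : ℝ≥0∞} {a b r c R : ℝ} {z : E}
    {B S A : Set E} (hBS : B ⊆ S) (hSA : S ⊆ A) (hA : A ⊆ ball z (R * c)) (hR : 0 < R)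
    (hf : AEStronglyMeasurable f (μ.restrict A)) (hg : AEStronglyMeasurable g (μ.restrict A))
    (ha : 0 < a) (hb : 0 < b) (hab : a + b = 1)
    (hpq : ENNReal.ofReal a * p⁻¹ + ENNReal.ofReal b * q⁻¹ = 2⁻¹) (hr : 2 ≤ r)
    {ε : ℝ≥0∞} (hε₀ : ε ≠ 0) (hε : ε ≠ ∞) (κ : ℝ≥0∞) :
    κ * ∫⁻ x in B, ‖f x‖ₑ * ‖g x‖ₑ ∂μ ≤ ε * eLpNorm f p (μ.restrict S) ^ 2 +
      ε ^ (1 - (1 - a / 2)⁻¹) * μ (ball 0 c) ^ ((1 / 2 - 1 / r) * (1 - a / 2)⁻¹) *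
        κ ^ (1 - a / 2)⁻¹ *
        ENNReal.ofReal (R ^ (Module.finrank ℝ E * (1 / 2 - 1 / r) * (1 - a / 2)⁻¹)) *
        eLpNorm f q (μ.restrict A) ^ (b * (1 - a / 2)⁻¹) *
        eLpNorm g (ENNReal.ofReal r) (μ.restrict A) ^ (1 - a / 2)⁻¹ := by
  have hg₂ := (eLpNorm_mono_measure g (Measure.restrict_mono_set μ hSA)).trans
    (eLpNorm_restrict_le_mul_rpow_of_subset_ball μ hg hA hR two_pos hr)
  rw [ENNReal.ofReal_ofNat] at hg₂
  have hP : 0 ≤ (1 - a / 2)⁻¹ := inv_nonneg.2 (by linarith)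
  calc κ * ∫⁻ x in B, ‖f x‖ₑ * ‖g x‖ₑ ∂μ
      ≤ κ * ∫⁻ x in S, ‖f x‖ₑ * ‖g x‖ₑ ∂μ := by gcongr
    _ ≤ _ := mul_lintegral_enorm_mul_le_mul_eLpNorm_sq_add (hf.mono_set hSA) (hg.mono_set hSA)
        ha hb hab hpq hε₀ hε κ
    _ ≤ ε * eLpNorm f p (μ.restrict S) ^ 2 +
        ε ^ (1 - (1 - a / 2)⁻¹) * (κ * eLpNorm f q (μ.restrict A) ^ b *
          (eLpNorm g (ENNReal.ofReal r) (μ.restrict A) *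
            (ENNReal.ofReal (R ^ (Module.finrank ℝ E * (1 / 2 - 1 / r))) *
              μ (ball 0 c) ^ (1 / 2 - 1 / r)))) ^ (1 - a / 2)⁻¹ := by gcongr
    _ = _ := by
        rw [Real.rpow_mul hR.le (_ * (1 / 2 - 1 / r)),
          ← ENNReal.ofReal_rpow_of_nonneg (by positivity) hP]
        simp only [ENNReal.mul_rpow_of_nonneg _ _ hP, ENNReal.rpow_mul]
        ring

theorem J5_estimate_iii_general {q r δ : ℝ} (hq₀ : 0 < q) (hq₂ : q < 2) (hr : 2 ≤ r) (hδ : 0 < δ) :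
    ∃ C : ℝ, 0 < C ∧ ∀ R s t : ℝ, R ≤ s → s < t → t ≤ 2 * R → ∀ (v : E → F) (g : E → G),
      AEStronglyMeasurable v (μ.restrict (ball 0 (2 * R) \ ball 0 R)) →
      AEStronglyMeasurable g (μ.restrict (ball 0 (2 * R) \ ball 0 R)) →
        ENNReal.ofReal ((t - s)⁻¹) *
          ∫⁻ x in ball 0 t \ ball 0 s, ENNReal.ofReal (‖v x‖ * ‖g x‖) ∂μ
        ≤ ENNReal.ofReal δ *
            eLpNorm v (ENNReal.ofReal 6) (μ.restrict (ball 0 t \ ball 0 R)) ^ 2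
          + ENNReal.ofReal C * ENNReal.ofReal ((t - s) ^ (-(2 * (6 - q) / (6 + q)))) *
              ENNReal.ofReal (R ^ (Module.finrank ℝ E * (r - 2) * (6 - q) / (r * (6 + q)))) *
              eLpNorm v (ENNReal.ofReal q) (μ.restrict (ball 0 (2 * R) \ ball 0 R)) ^
                (4 * q / (6 + q)) *
              eLpNorm g (ENNReal.ofReal r) (μ.restrict (ball 0 (2 * R) \ ball 0 R)) ^
                (2 * (6 - q) / (6 + q)) := by
  have : 0 < 2 - q := by linarith
  have : 0 < 6 - q := by linarith
  set P : ℝ := 2 * (6 - q) / (6 + q) with hP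
  have hP₀ : 0 ≤ P := by rw [hP]; positivity
  have hμ : 0 < μ.real (ball 0 2) :=
    ENNReal.toReal_pos (measure_ball_pos μ 0 two_pos).ne' measure_ball_lt_top.ne
  refine ⟨δ ^ (1 - P) * μ.real (ball 0 2) ^ ((1 / 2 - 1 / r) * P), by positivity,
    fun R s t hs hst ht v g hv hg => ?_⟩
  have hts : 0 < t - s := sub_pos.2 hst
  have hR : 0 < R := by linarith
  have hC : ENNReal.ofReal δ ^ (1 - P) * μ (ball 0 2) ^ ((1 / 2 - 1 / r) * P) =
      ENNReal.ofReal (δ ^ (1 - P) * μ.real (ball 0 2) ^ ((1 / 2 - 1 / r) * P)) := by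
    rw [← ofReal_measureReal measure_ball_lt_top.ne, ENNReal.ofReal_rpow_of_pos hδ,
      ENNReal.ofReal_rpow_of_pos hμ, ENNReal.ofReal_mul (by positivity)]
  have hκ : ENNReal.ofReal (t - s)⁻¹ ^ P = ENNReal.ofReal ((t - s) ^ (-P)) := by
    rw [ENNReal.ofReal_rpow_of_nonneg (by positivity) hP₀, Real.inv_rpow hts.le,
      Real.rpow_neg hts.le]
  have hR_exp : Module.finrank ℝ E * (1 / 2 - 1 / r) * P =
      Module.finrank ℝ E * (r - 2) * (6 - q) / (r * (6 + q)) := by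
    rw [hP]
    field_simp
  have hq_exp : 2 * q / (6 - q) * P = 4 * q / (6 + q) := by
    rw [hP]
    field_simp
    ring
  have hbound := mul_setLIntegral_enorm_mul_le_mul_eLpNorm_sq_add μ
    (Set.sdiff_subset_sdiff_right (ball_subset_ball hs))
    (Set.sdiff_subset_sdiff_left (ball_subset_ball ht))
    (Set.sdiff_subset.trans_eq (by rw [mul_comm])) hR hv hg (by positivity) (by positivity)
    (by field_simp; ring) (interpolation_weights_six_two hq₀ hq₂) hr
    (ENNReal.ofReal_pos.2 hδ).ne' ENNReal.ofReal_ne_top (ENNReal.ofReal (t - s)⁻¹)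
  rw [inv_one_sub_interpolation_weight_div_two hq₂, ← hP, hC, hκ, hR_exp, hq_exp] at hbound
  simpa only [ENNReal.ofReal_mul (norm_nonneg _), ofReal_norm] using hbound

end HaarMeasure

theorem J5_estimate_iii (q r : ℝ) (hq : 1 ≤ q ∧ q < 2) (hr : 2 ≤ r ∧ r ≤ 6) :
    ∀ δ : ℝ, 0 < δ → ∃ Cδ : ℝ, 0 < Cδ ∧
      ∀ R s t : ℝ, 0 < R → 3 * R / 2 ≤ s → s < t → t ≤ 2 * R →
      ∀ v : E3 → E3, ∀ θ : E3 → ℝ, ContDiff ℝ (⊤ : ℕ∞) v → ContDiff ℝ (⊤ : ℕ∞) θ →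
        ENNReal.ofReal ((t - s)⁻¹) *
          ∫⁻ x in ball (0 : E3) t \ ball (0 : E3) s,
            ENNReal.ofReal (‖v x‖ * |θ x - thetaBar θ R|)
        ≤ ENNReal.ofReal δ * LpS v 6 (ball (0 : E3) t \ ball (0 : E3) R) ^ 2
          + ENNReal.ofReal Cδ * ENNReal.ofReal ((t - s) ^ (-(2 * (6 - q) / (6 + q)))) *
              ENNReal.ofReal (R ^ (3 * (r - 2) * (6 - q) / (r * (6 + q)))) *
              LpS v q (Ann R) ^ (4 * q / (6 + q)) *
              LpS (fun x => θ x - thetaBar θ R) r (Ann R) ^ (2 * (6 - q) / (6 + q)) := by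
  intro δ hδ
  obtain ⟨C, hC, h⟩ := J5_estimate_iii_general (F := E3) (G := ℝ) (volume : Measure E3)
    (by linarith) hq.2 hr.1 hδ
  refine ⟨C, hC, fun R s t _ hs hst ht v θ hv hθ => ?_⟩
  simpa only [finrank_euclideanSpace_fin, Nat.cast_ofNat] using!
    h R s t (by linarith) hst ht v (fun x => θ x - thetaBar θ R) hv.continuous.aestronglyMeasurable
      (hθ.continuous.sub continuous_const).aestronglyMeasurable
end
end
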